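/- arXiv:2407.21187 — 2 statements merged into one kernel-verified Lean document; each statement's English description precedes it below -/
import Mathlib

section
/- For all real s ∈ [0, 1] and all real y ∈ [0, 1], one has (4s − 6s² − 2y + 4ys) · s · (1 − s) ≤ 0.155. -/
/-!
For fixed `s` the expression is affine in `y`, so on `[0, 1]` it is at most the larger of its values
at `y = 0` and `y = 1`. These are `p s` and `p (1 - s)` for the single quartic
`p s = (4 s - 6 s ^ 2) s (1 - s)`, which reflects that replacing `(z, y)` by `(-z, 1 - y)` leaves
`(σ(z) - y) ^ 2` unchanged. Near its maximum on `[0, 1]`, the quartic `p` has tangents that dominate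
it on the whole interval; one with a slightly negative slope gives the numerical bound.
-/

section CommRing

variable {R : Type*} [CommRing R]

/-- The second derivative of `z ↦ σ(z) ^ 2`, the squared error for the target `0`, as a polynomial
in the sigmoid value `s = σ(z)`. For the target `1` it has to be evaluated at `1 - s`. -/
def zeroTargetCurvature (s : R) : R :=
  (4 * s - 6 * s ^ 2) * s * (1 - s)

theorem curvature_eq_combo_zeroTargetCurvature (s y : R) :
    (4 * s - 6 * s ^ 2 - 2 * y + 4 * y * s) * s * (1 - s) =
      (1 - y) * zeroTargetCurvature s + y * zeroTargetCurvature (1 - s) := by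
  unfold zeroTargetCurvature
  ring

-- The left-hand side is the tangent at `c`. In the cofactor of `(s - c) ^ 2`, the last two terms
-- interpolate linearly between its values at `s = 0` and `s = 1`.
theorem tangent_sub_zeroTargetCurvature (c s : R) :
    2 * c ^ 2 * (10 * c - 9 * c ^ 2 - 2) + 2 * c * (12 * c ^ 2 - 15 * c + 4) * s -
        zeroTargetCurvature s =
      (s - c) ^ 2 * (6 * (s * (1 - s)) + 2 * ((10 * c - 9 * c ^ 2 - 2) * (1 - s)) +
        2 * (c * (4 - 9 * c) * s)) := by
  unfold zeroTargetCurvature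
  ring

end CommRing

section OrderedCommRing

variable {R : Type*} [CommRing R] [LinearOrder R] [IsStrictOrderedRing R]

theorem curvature_le_max_zeroTargetCurvature (s : R) {y : R} (hy0 : 0 ≤ y) (hy1 : y ≤ 1) :
    (4 * s - 6 * s ^ 2 - 2 * y + 4 * y * s) * s * (1 - s) ≤
      max (zeroTargetCurvature s) (zeroTargetCurvature (1 - s)) := by
  rw [curvature_eq_combo_zeroTargetCurvature]
  exact Convex.combo_le_max _ _ (sub_nonneg.2 hy1) hy0 (sub_add_cancel 1 y)

theorem zeroTargetCurvature_le_tangent {c s : R} (hc : 2 + 9 * c ^ 2 ≤ 10 * c) (hc' : 9 * c ≤ 4)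
    (hs0 : 0 ≤ s) (hs1 : s ≤ 1) :
    zeroTargetCurvature s ≤
      2 * c ^ 2 * (10 * c - 9 * c ^ 2 - 2) + 2 * c * (12 * c ^ 2 - 15 * c + 4) * s := by
  have : 0 ≤ c := by linarith [sq_nonneg c]
  have : 0 ≤ 1 - s := sub_nonneg.2 hs1
  have : 0 ≤ 10 * c - 9 * c ^ 2 - 2 := by linarith
  have : 0 ≤ 4 - 9 * c := sub_nonneg.2 hc'
  rw [← sub_nonneg, tangent_sub_zeroTargetCurvature]
  positivity

end OrderedCommRing

section OrderedField

variable {K : Type*} [Field K] [LinearOrder K] [IsStrictOrderedRing K]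

theorem zeroTargetCurvature_le {s : K} (hs0 : 0 ≤ s) (hs1 : s ≤ 1) :
    zeroTargetCurvature s ≤ 0.155 := by
  -- Over `ℝ` the maximum is attained at `(15 - √33) / 24 ≈ 0.3856`; just to the right of it the
  -- slope is negative, so that the tangent is largest at `s = 0`.
  let c : K := 0.386
  have slope_nonpos : 2 * c * (12 * c ^ 2 - 15 * c + 4) ≤ 0 := by norm_num [c]
  have intercept_le : 2 * c ^ 2 * (10 * c - 9 * c ^ 2 - 2) ≤ 0.155 := by norm_num [c]
  calc
    zeroTargetCurvature s
      ≤ 2 * c ^ 2 * (10 * c - 9 * c ^ 2 - 2) + 2 * c * (12 * c ^ 2 - 15 * c + 4) * s :=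
        zeroTargetCurvature_le_tangent (by norm_num [c]) (by norm_num [c]) hs0 hs1
    _ ≤ 2 * c ^ 2 * (10 * c - 9 * c ^ 2 - 2) :=
        add_le_of_nonpos_right (mul_nonpos_of_nonpos_of_nonneg slope_nonpos hs0)
    _ ≤ 0.155 := intercept_le

theorem stmt11_general (s y : K) (hs0 : 0 ≤ s) (hs1 : s ≤ 1) (hy0 : 0 ≤ y) (hy1 : y ≤ 1) :
    (4 * s - 6 * s ^ 2 - 2 * y + 4 * y * s) * s * (1 - s) ≤ 0.155 :=
  (curvature_le_max_zeroTargetCurvature s hy0 hy1).trans <|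
    max_le (zeroTargetCurvature_le hs0 hs1)
      (zeroTargetCurvature_le (sub_nonneg.2 hs1) (sub_le_self 1 hs0))

end OrderedField

/-- For all `s ∈ [0,1]` and `y ∈ [0,1]`,
`(4s − 6s² − 2y + 4ys)·s·(1−s) ≤ 0.155`. -/
theorem stmt11 (s y : ℝ) (hs0 : 0 ≤ s) (hs1 : s ≤ 1) (hy0 : 0 ≤ y) (hy1 : y ≤ 1) :
    (4 * s - 6 * s ^ 2 - 2 * y + 4 * y * s) * s * (1 - s) ≤ 0.155 :=
  stmt11_general s y hs0 hs1 hy0 hy1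
end

section
/- For every real y ∈ [0, 1] and every z ∈ ℝ, the second derivative of the function h(z) = (σ(z) − y)² satisfies h″(z) = (4 σ(z) − 6 σ(z)² − 2y + 4 y σ(z)) σ(z) (1 − σ(z)) ≤ 0.155. -/
/-- The logistic (sigmoid) function `σ(z) = 1/(1 + exp(−z))`. -/
noncomputable def sigmoid (z : ℝ) : ℝ := 1 / (1 + Real.exp (-z))

/-!
Since `σ' = σ(1 - σ)` and `σ'' = σ(1 - σ)(1 - 2σ)`, the second derivative is a polynomial in `σ` and
`y`. It is affine in `y` and invariant under `(y, σ) ↦ (1 - y, 1 - σ)`, so for `y ∈ [0, 1]` it is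
a convex combination of the values at `σ` and `1 - σ` of the quartic obtained for `y = 0`. That
quartic attains its maximum on `[0, 1]`, about `0.1541`, at `(15 - √33) / 24 ≈ 0.3856`.
-/

open Filter Topology

lemma deriv_deriv_sub_const_sq {𝕜 𝔸 : Type*} [NontriviallyNormedField 𝕜] [NormedCommRing 𝔸]
    [NormedAlgebra 𝕜 𝔸] {f f' : 𝕜 → 𝔸} {f'' : 𝔸} {x : 𝕜} (c : 𝔸)
    (hf : ∀ᶠ t in 𝓝 x, HasDerivAt f (f' t) t) (hf' : HasDerivAt f' f'' x) :
    deriv (deriv fun t => (f t - c) ^ 2) x = 2 * (f' x ^ 2 + (f x - c) * f'') := by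
  have first_deriv : deriv (fun t => (f t - c) ^ 2) =ᶠ[𝓝 x] fun t => 2 * ((f t - c) * f' t) := by
    filter_upwards [hf] with t ht
    refine (((ht.sub_const c).fun_pow 2).congr_deriv ?_).deriv
    ring
  have second_deriv : HasDerivAt (fun t => 2 * ((f t - c) * f' t))
      (2 * (f' x * f' x + (f x - c) * f'')) x :=
    ((hf.self_of_nhds.sub_const c).fun_mul hf').const_mul 2
  rw [first_deriv.deriv_eq, second_deriv.deriv, sq]

/-- The second derivative of the squared error `(σ(z) - y) ^ 2` with respect to `z`, expressed as a
polynomial in the target `y` and the activation `s = σ(z)`. -/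
def squaredErrorCurvature (y s : ℝ) : ℝ :=
  (4 * s - 6 * s ^ 2 - 2 * y + 4 * y * s) * s * (1 - s)

lemma squaredErrorCurvature_one_sub_one_sub (y s : ℝ) :
    squaredErrorCurvature (1 - y) (1 - s) = squaredErrorCurvature y s := by
  simp only [squaredErrorCurvature]
  ring

lemma squaredErrorCurvature_eq_convex_combination (y s : ℝ) :
    squaredErrorCurvature y s =
      (1 - y) * squaredErrorCurvature 0 s + y * squaredErrorCurvature 1 s := by
  simp only [squaredErrorCurvature]
  ring

lemma squaredErrorCurvature_zero_le {s : ℝ} (hs : s ∈ Set.Icc 0 1) :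
    squaredErrorCurvature 0 s ≤ 0.155 := by
  -- Division with remainder by `(s - 0.386) ^ 2`, where `0.386` approximates the maximiser.
  have division : 0.155 - squaredErrorCurvature 0 s =
      (s - 0.386) ^ 2 * (6 * (s * (1 - s)) + 1.038072 * (1 - s) + 0.406072 * s)
        + (0.001581056 * s + 0.000331424288) := by
    simp only [squaredErrorCurvature]
    ring
  have s_nonneg : 0 ≤ s := hs.1
  have one_sub_nonneg : 0 ≤ 1 - s := sub_nonneg.2 hs.2
  have gap_nonneg : 0 ≤ 0.155 - squaredErrorCurvature 0 s := by
    rw [division]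
    positivity
  exact sub_nonneg.1 gap_nonneg

lemma squaredErrorCurvature_one_le {s : ℝ} (hs : s ∈ Set.Icc 0 1) :
    squaredErrorCurvature 1 s ≤ 0.155 := by
  rw [← squaredErrorCurvature_one_sub_one_sub, sub_self]
  exact squaredErrorCurvature_zero_le (Set.Icc.one_sub_mem hs)

lemma squaredErrorCurvature_le {y s : ℝ} (hy : y ∈ Set.Icc 0 1) (hs : s ∈ Set.Icc 0 1) :
    squaredErrorCurvature y s ≤ 0.155 :=
  calc squaredErrorCurvature y s
      = (1 - y) * squaredErrorCurvature 0 s + y * squaredErrorCurvature 1 s :=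
        squaredErrorCurvature_eq_convex_combination y s
    _ ≤ (1 - y) * 0.155 + y * 0.155 :=
        add_le_add
          (mul_le_mul_of_nonneg_left (squaredErrorCurvature_zero_le hs) (sub_nonneg.2 hy.2))
          (mul_le_mul_of_nonneg_left (squaredErrorCurvature_one_le hs) hy.1)
    _ = 0.155 := by ring

lemma sigmoid_eq_real_sigmoid : sigmoid = Real.sigmoid := by
  funext x
  rw [sigmoid, Real.sigmoid_def, one_div]

lemma hasDerivAt_real_sigmoid_mul_one_sub (x : ℝ) :
    HasDerivAt (fun t => Real.sigmoid t * (1 - Real.sigmoid t))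
      (Real.sigmoid x * (1 - Real.sigmoid x) * (1 - 2 * Real.sigmoid x)) x := by
  have hσ := Real.hasDerivAt_sigmoid x
  refine (hσ.fun_mul (hσ.const_sub 1)).congr_deriv ?_
  ring

lemma deriv_deriv_real_sigmoid_sub_const_sq (y z : ℝ) :
    deriv (deriv fun t => (Real.sigmoid t - y) ^ 2) z =
      squaredErrorCurvature y (Real.sigmoid z) := by
  rw [deriv_deriv_sub_const_sq y (.of_forall Real.hasDerivAt_sigmoid)
    (hasDerivAt_real_sigmoid_mul_one_sub z), squaredErrorCurvature]
  ring

/-- For every `y ∈ [0,1]` and every `z ∈ ℝ`, the second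
derivative of `h(z) = (σ(z) − y)²` satisfies
`h″(z) = (4σ(z) − 6σ(z)² − 2y + 4yσ(z))σ(z)(1 − σ(z)) ≤ 0.155`. -/
theorem stmt12 (y : ℝ) (hy0 : 0 ≤ y) (hy1 : y ≤ 1) (z : ℝ) :
    deriv (deriv fun z => (sigmoid z - y) ^ 2) z
        = (4 * sigmoid z - 6 * sigmoid z ^ 2 - 2 * y + 4 * y * sigmoid z)
            * sigmoid z * (1 - sigmoid z) ∧
      (4 * sigmoid z - 6 * sigmoid z ^ 2 - 2 * y + 4 * y * sigmoid z)
          * sigmoid z * (1 - sigmoid z) ≤ 0.155 := by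
  rw [sigmoid_eq_real_sigmoid]
  have sigmoid_mem : Real.sigmoid z ∈ Set.Icc 0 1 :=
    ⟨Real.sigmoid_nonneg z, Real.sigmoid_le_one z⟩
  exact ⟨deriv_deriv_real_sigmoid_sub_const_sq y z,
    squaredErrorCurvature_le ⟨hy0, hy1⟩ sigmoid_mem⟩
end
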